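/- arXiv:2404.05948 — 2 statements merged into one kernel-verified Lean document; each statement's English description precedes it below -/
import Mathlib

section
/- There is a constant C ≥ 0 such that the following holds for every precision p ≥ 6, u = 2^(1−p), every fixed rounding function R ∈ {RD, RU} used at every operation, all o_x, o_y ∈ [1, 1/(8u) − 2], and all x_h, x_l, y_h, y_l ∈ F_p with |x_l| ≤ o_x·u·|x_h| and |y_l| ≤ o_y·u·|y_h|, under the sign condition that x_l ≥ 0 and y_l ≥ 0 if R = RD, and x_l ≤ 0 and y_l ≤ 0 if R = RU. The modified accurate double-word addition, in which the step (t_h, t_l) = 2Sum(x_l, y_l) is replaced by (t_h, t_l) = Fast2Sum(x_l, y_l) if |x_l| ≥ |y_l| and (t_h, t_l) = Fast2Sum(y_l, x_l) otherwise, satisfies |z_h + z_l − S| ≤ ((3o + 15)·u² + C·(1 + o)·u³)·|S|, where o = max(o_x, o_y) and S = x_h + x_l + y_h + y_l. -/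
/-- The radix-2, precision-`p` floating-point numbers with unlimited exponent range. -/
def Fp (p : ℕ) : Set ℝ := {x : ℝ | ∃ M e : ℤ, |M| ≤ 2 ^ p - 1 ∧ x = (M : ℝ) * (2 : ℝ) ^ e}

/-- Round toward `-∞`: the largest floating-point number `≤ x`. -/
noncomputable def RD (p : ℕ) (x : ℝ) : ℝ := sSup {f : ℝ | f ∈ Fp p ∧ f ≤ x}

/-- Round toward `+∞`: the smallest floating-point number `≥ x`. -/
noncomputable def RU (p : ℕ) (x : ℝ) : ℝ := sInf {f : ℝ | f ∈ Fp p ∧ x ≤ f}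

/-- `y` is a faithful rounding of `x`. -/
def Faithful (p : ℕ) (x y : ℝ) : Prop := y = RD p x ∨ y = RU p x

/-- `2Sum(a,b)` with rounding function `R`. -/
noncomputable def twoSum (R : ℝ → ℝ) (a b : ℝ) : ℝ × ℝ :=
  let s := R (a + b)
  let a' := R (s - b)
  let b' := R (s - a')
  (s, R (R (a - a') + R (b - b')))

/-- `Fast2Sum(a,b)` with rounding function `R`. -/
noncomputable def fast2Sum (R : ℝ → ℝ) (a b : ℝ) : ℝ × ℝ :=
  let s := R (a + b)
  let d := R (s - a)
  (s, R (b - d))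

/-- Accurate double-word addition with rounding function `R`. -/
noncomputable def accurateAdd (R : ℝ → ℝ) (xh xl yh yl : ℝ) : ℝ × ℝ :=
  let s := twoSum R xh yh
  let t := twoSum R xl yl
  let c := R (s.2 + t.1)
  let v := fast2Sum R s.1 c
  let w := R (t.2 + v.2)
  fast2Sum R v.1 w

/-- Modified accurate double-word addition: the step `(t_h,t_l) = 2Sum(x_l,y_l)` is
replaced by `Fast2Sum` applied to `(x_l,y_l)` ordered by decreasing absolute value. -/
noncomputable def modAccurateAdd (R : ℝ → ℝ) (xh xl yh yl : ℝ) : ℝ × ℝ :=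
  let s := twoSum R xh yh
  let t := if |yl| ≤ |xl| then fast2Sum R xl yl else fast2Sum R yl xl
  let c := R (s.2 + t.1)
  let v := fast2Sum R s.1 c
  let w := R (t.2 + v.2)
  fast2Sum R v.1 w

/-!
For nonzero `x` every faithful rounding error is smaller than the spacing `2 ^ e` of the binade of
`x`, so that the relative error is at most `u = eps p`, and roundings of multiples of `2 ^ e` are
again multiples of `2 ^ e`.

Because `x_l` and `y_l` have the same sign and their sum `T` is rounded toward zero, `T - R T` is a
floating-point number, so `Fast2Sum` turns `T` into `t_h = R T` and `t_l = T - R T` without error.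
What remains is the defect of `2Sum` on the high parts (`6 u²`), the rounding of `c = s_l + t_h`
(`(3 o + 2) u²`), and the last two steps (`3 u²`), which add up to `(3 o + 11) u²` to leading order.

These estimates can be made relative to the exact sum when `|x_h| + |y_h| ≤ 3 |x_h + y_h|`. In the
other case `x_h + y_h` is exact and lies on the grid of `T`, so that only the last steps can err,
by at most `5 u²`.
-/

/-! ### Grids and binades -/

/-- The grid `2 ^ e ℤ` of integer multiples of `2 ^ e`. -/
noncomputable def dyadicGrid (e : ℤ) : AddSubgroup ℝ := AddSubgroup.zmultiples ((2 : ℝ) ^ e)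

/-- The binade in which consecutive elements of `Fp p` are `2 ^ e` apart. It is indexed by this
spacing rather than by the exponent of its endpoints. -/
structure InBinade (p : ℕ) (e : ℤ) (x : ℝ) : Prop where
  zpow_le_abs : (2 : ℝ) ^ ((p : ℤ) - 1 + e) ≤ |x|
  abs_lt_zpow : |x| < (2 : ℝ) ^ ((p : ℤ) + e)

/-- The quantity `u = 2 ^ (1 - p)`, which bounds the relative error of a faithful rounding. -/
noncomputable def eps (p : ℕ) : ℝ := (2 : ℝ) ^ (1 - (p : ℤ))

section Grid

variable {e f : ℤ} {x y : ℝ}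

lemma two_zpow_add_one (e : ℤ) : (2 : ℝ) ^ (e + 1) = 2 * (2 : ℝ) ^ e := by
  rw [zpow_add_one₀ two_ne_zero, mul_comm]

lemma two_zpow_le_two_zpow : (2 : ℝ) ^ e ≤ (2 : ℝ) ^ f ↔ e ≤ f :=
  zpow_le_zpow_iff_right₀ one_lt_two

lemma two_zpow_lt_two_zpow : (2 : ℝ) ^ e < (2 : ℝ) ^ f ↔ e < f :=
  zpow_lt_zpow_iff_right₀ one_lt_two

lemma mem_dyadicGrid : x ∈ dyadicGrid e ↔ ∃ n : ℤ, (n : ℝ) * (2 : ℝ) ^ e = x := by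
  simp only [dyadicGrid, AddSubgroup.mem_zmultiples_iff, zsmul_eq_mul]

lemma two_zpow_mem_dyadicGrid (h : e ≤ f) : (2 : ℝ) ^ f ∈ dyadicGrid e := by
  obtain ⟨k, rfl⟩ := Int.le.dest h
  refine mem_dyadicGrid.2 ⟨2 ^ k, ?_⟩
  rw [zpow_add₀ two_ne_zero, zpow_natCast]
  push_cast
  ring

lemma dyadicGrid_antitone : Antitone dyadicGrid := fun _ _ h =>
  AddSubgroup.zmultiples_le_of_mem (two_zpow_mem_dyadicGrid h)

lemma add_two_zpow_le_of_lt (hx : x ∈ dyadicGrid e) (hy : y ∈ dyadicGrid e) (h : x < y) :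
    x + (2 : ℝ) ^ e ≤ y := by
  obtain ⟨n, rfl⟩ := mem_dyadicGrid.1 hx
  obtain ⟨m, rfl⟩ := mem_dyadicGrid.1 hy
  have he : (0 : ℝ) < (2 : ℝ) ^ e := by positivity
  have hnm : n + 1 ≤ m := by exact_mod_cast lt_of_mul_lt_mul_right h he.le
  calc (n : ℝ) * 2 ^ e + 2 ^ e = ((n + 1 : ℤ) : ℝ) * 2 ^ e := by push_cast; ring
    _ ≤ m * 2 ^ e := by gcongr

lemma abs_add_two_zpow_le_of_abs_lt (hx : x ∈ dyadicGrid e) (hef : e ≤ f)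
    (h : |x| < (2 : ℝ) ^ f) : |x| + (2 : ℝ) ^ e ≤ (2 : ℝ) ^ f :=
  add_two_zpow_le_of_lt (abs_mem_iff.2 hx) (two_zpow_mem_dyadicGrid hef) h

lemma exists_inBinade (p : ℕ) (hx : x ≠ 0) : ∃ e, InBinade p e x := by
  obtain ⟨n, hle, hlt⟩ := exists_mem_Ico_zpow (abs_pos.2 hx) one_lt_two
  refine ⟨n - p + 1, ?_, ?_⟩
  · rwa [show (p : ℤ) - 1 + (n - p + 1) = n by ring]
  · rwa [show (p : ℤ) + (n - p + 1) = n + 1 by ring]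

end Grid

section Eps

variable {p : ℕ} {e : ℤ} {x : ℝ}

lemma eps_pos (p : ℕ) : 0 < eps p := by
  unfold eps
  positivity

lemma eps_le_one_div_32 (hp : 6 ≤ p) : eps p ≤ 1 / 32 :=
  calc eps p ≤ (2 : ℝ) ^ (-5 : ℤ) := two_zpow_le_two_zpow.2 (by omega)
    _ = 1 / 32 := by norm_num

lemma two_zpow_eq_eps_mul (p : ℕ) (e : ℤ) :
    (2 : ℝ) ^ e = eps p * (2 : ℝ) ^ ((p : ℤ) - 1 + e) := by
  rw [eps, ← zpow_add₀ two_ne_zero]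
  congr 1
  ring

lemma two_zpow_eq_half_eps_mul (p : ℕ) (e : ℤ) :
    (2 : ℝ) ^ e = eps p / 2 * (2 : ℝ) ^ ((p : ℤ) + e) := by
  rw [two_zpow_eq_eps_mul p, show (p : ℤ) + e = (p : ℤ) - 1 + e + 1 by ring, two_zpow_add_one]
  ring

lemma InBinade.two_zpow_le_eps_mul (h : InBinade p e x) : (2 : ℝ) ^ e ≤ eps p * |x| := by
  rw [two_zpow_eq_eps_mul p]
  exact mul_le_mul_of_nonneg_left h.zpow_le_abs (eps_pos p).le

end Eps

/-! ### Floating-point numbers -/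

section FloatingPoint

variable {p : ℕ} {e : ℤ} {x : ℝ}

lemma neg_mem_Fp (hx : x ∈ Fp p) : -x ∈ Fp p := by
  obtain ⟨M, e, hM, rfl⟩ := hx
  exact ⟨-M, e, by rwa [abs_neg], by push_cast; ring⟩

lemma abs_mem_Fp (hx : x ∈ Fp p) : |x| ∈ Fp p := by
  rcases abs_choice x with h | h <;> rw [h]
  exacts [hx, neg_mem_Fp hx]

lemma zero_mem_Fp (p : ℕ) : (0 : ℝ) ∈ Fp p :=
  ⟨0, 0, by simpa using one_le_pow₀ (one_le_two (α := ℤ)), by simp⟩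

lemma two_zpow_mem_Fp (hp : 1 ≤ p) (e : ℤ) : (2 : ℝ) ^ e ∈ Fp p := by
  have : (2 : ℤ) ^ 1 ≤ 2 ^ p := pow_le_pow_right₀ one_le_two hp
  exact ⟨1, e, by rw [abs_one]; omega, by simp⟩

lemma mem_Fp_of_mem_dyadicGrid (hp : 1 ≤ p) (hx : x ∈ dyadicGrid e)
    (h : |x| ≤ (2 : ℝ) ^ ((p : ℤ) + e)) : x ∈ Fp p := by
  rcases h.lt_or_eq with hlt | heq
  · obtain ⟨n, rfl⟩ := mem_dyadicGrid.1 hx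
    refine ⟨n, e, Int.le_sub_one_of_lt ?_, rfl⟩
    have he : (0 : ℝ) < (2 : ℝ) ^ e := by positivity
    rw [zpow_add₀ two_ne_zero, zpow_natCast, abs_mul, abs_of_pos he] at hlt
    exact_mod_cast lt_of_mul_lt_mul_right hlt he.le
  · have hpow := two_zpow_mem_Fp hp ((p : ℤ) + e)
    rcases eq_or_eq_neg_of_abs_eq heq with rfl | rfl
    exacts [hpow, neg_mem_Fp hpow]

lemma mem_dyadicGrid_of_mem_Fp (hx : x ∈ Fp p) (h : (2 : ℝ) ^ ((p : ℤ) - 1 + e) ≤ |x|) :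
    x ∈ dyadicGrid e := by
  obtain ⟨M, f, hM, rfl⟩ := hx
  have hf : (0 : ℝ) < (2 : ℝ) ^ f := by positivity
  have hMlt : |(M : ℝ)| < (2 : ℝ) ^ p := by
    exact_mod_cast show |M| < 2 ^ p by omega
  have hlt : (2 : ℝ) ^ ((p : ℤ) - 1 + e) < (2 : ℝ) ^ ((p : ℤ) + f) := by
    rw [zpow_add₀ two_ne_zero (p : ℤ) f, zpow_natCast]
    rw [abs_mul, abs_of_pos hf] at h
    exact h.trans_lt (mul_lt_mul_of_pos_right hMlt hf)
  have hef : e ≤ f := by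
    have := two_zpow_lt_two_zpow.1 hlt
    omega
  exact dyadicGrid_antitone hef (mem_dyadicGrid.2 ⟨M, rfl⟩)

lemma InBinade.mem_dyadicGrid (h : InBinade p e x) (hx : x ∈ Fp p) : x ∈ dyadicGrid e :=
  mem_dyadicGrid_of_mem_Fp hx h.zpow_le_abs

lemma InBinade.floor_mul_mem_Fp (hp : 1 ≤ p) (h : InBinade p e x) :
    (⌊x / (2 : ℝ) ^ e⌋ : ℝ) * (2 : ℝ) ^ e ∈ Fp p := by
  have he : (0 : ℝ) < (2 : ℝ) ^ e := by positivity
  refine mem_Fp_of_mem_dyadicGrid hp (_root_.mem_dyadicGrid.2 ⟨_, rfl⟩) ?_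
  obtain ⟨hlo, hhi⟩ := abs_lt.1 h.abs_lt_zpow
  rw [zpow_add₀ two_ne_zero, zpow_natCast] at hlo hhi ⊢
  have hfloor : -(2 : ℤ) ^ p ≤ ⌊x / (2 : ℝ) ^ e⌋ := by
    refine Int.le_floor.2 ((le_div_iff₀ he).2 ?_)
    push_cast
    linarith
  have hlower : -(2 : ℝ) ^ p ≤ ⌊x / (2 : ℝ) ^ e⌋ := by exact_mod_cast hfloor
  have hupper : (⌊x / (2 : ℝ) ^ e⌋ : ℝ) ≤ (2 : ℝ) ^ p :=
    (Int.floor_le _).trans ((div_le_iff₀ he).2 hhi.le)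
  rw [abs_mul, abs_of_pos he]
  gcongr
  exact abs_le.2 ⟨hlower, hupper⟩

lemma InBinade.neg (h : InBinade p e x) : InBinade p e (-x) :=
  ⟨by rw [abs_neg]; exact h.zpow_le_abs, by rw [abs_neg]; exact h.abs_lt_zpow⟩

lemma InBinade.exists_mem_Fp_le_lt_add (hp : 1 ≤ p) (h : InBinade p e x) :
    ∃ f ∈ Fp p, f ≤ x ∧ x < f + (2 : ℝ) ^ e := by
  have he : (0 : ℝ) < (2 : ℝ) ^ e := by positivity
  refine ⟨_, h.floor_mul_mem_Fp hp, (le_div_iff₀ he).1 (Int.floor_le _), ?_⟩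
  have := (div_lt_iff₀ he).1 (Int.lt_floor_add_one (x / (2 : ℝ) ^ e))
  linarith

end FloatingPoint

/-! ### Faithful rounding functions -/

/-- A rounding function that returns a floating-point number and never jumps over one. This is
the junk-free form of `∀ x, Faithful p x (R x)`: it does not refer to suprema and infima. -/
structure IsFaithfulRounding (p : ℕ) (R : ℝ → ℝ) : Prop where
  mem (x : ℝ) : R x ∈ Fp p
  le_round {f x : ℝ} : f ∈ Fp p → f ≤ x → f ≤ R x
  round_le {f x : ℝ} : f ∈ Fp p → x ≤ f → R x ≤ f

section DirectedRounding

variable {p : ℕ}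

lemma exists_isGreatest_Fp_le (hp : 1 ≤ p) (x : ℝ) :
    ∃ a, IsGreatest {f : ℝ | f ∈ Fp p ∧ f ≤ x} a := by
  rcases eq_or_ne x 0 with rfl | hx
  · exact ⟨0, ⟨zero_mem_Fp p, le_rfl⟩, fun f hf => hf.2⟩
  obtain ⟨e, he⟩ := exists_inBinade p hx
  have hpos : (0 : ℝ) < (2 : ℝ) ^ e := by positivity
  have grid_le : ∀ y ∈ dyadicGrid e, y ≤ x → y ≤ (⌊x / (2 : ℝ) ^ e⌋ : ℝ) * (2 : ℝ) ^ e := by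
    intro y hy hyx
    obtain ⟨n, rfl⟩ := mem_dyadicGrid.1 hy
    gcongr
    exact Int.le_floor.2 ((le_div_iff₀ hpos).2 hyx)
  refine ⟨_, ⟨he.floor_mul_mem_Fp hp, (le_div_iff₀ hpos).1 (Int.floor_le _)⟩, ?_⟩
  rintro f ⟨hf, hfx⟩
  rcases le_or_gt ((2 : ℝ) ^ ((p : ℤ) - 1 + e)) |f| with hlarge | hsmall
  · exact grid_le f (mem_dyadicGrid_of_mem_Fp hf hlarge) hfx
  -- a floating-point number below the binade of `x` cannot lie below a negative `x`
  obtain ⟨hflo, hfhi⟩ := abs_lt.1 hsmall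
  rcases le_abs.1 he.zpow_le_abs with hx | hx
  · exact hfhi.le.trans (grid_le _ (two_zpow_mem_dyadicGrid (by omega)) hx)
  · linarith

lemma RD_isGreatest (hp : 1 ≤ p) (x : ℝ) :
    IsGreatest {f : ℝ | f ∈ Fp p ∧ f ≤ x} (RD p x) := by
  obtain ⟨a, ha⟩ := exists_isGreatest_Fp_le hp x
  rwa [RD, ha.csSup_eq]

lemma RU_isLeast (hp : 1 ≤ p) (x : ℝ) : IsLeast {f : ℝ | f ∈ Fp p ∧ x ≤ f} (RU p x) := by
  obtain ⟨a, ⟨haF, hax⟩, hub⟩ := exists_isGreatest_Fp_le hp (-x)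
  have hleast : IsLeast {f : ℝ | f ∈ Fp p ∧ x ≤ f} (-a) :=
    ⟨⟨neg_mem_Fp haF, le_neg_of_le_neg hax⟩, fun f hf =>
      neg_le.1 (hub ⟨neg_mem_Fp hf.1, neg_le_neg hf.2⟩)⟩
  rwa [RU, hleast.csInf_eq]

lemma isFaithfulRounding_of_faithful (hp : 1 ≤ p) {R : ℝ → ℝ} (h : ∀ x, Faithful p x (R x)) :
    IsFaithfulRounding p R where
  mem x := by
    rcases h x with hx | hx <;> rw [hx]
    exacts [(RD_isGreatest hp x).1.1, (RU_isLeast hp x).1.1]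
  le_round {f x} hf hfx := by
    rcases h x with hx | hx <;> rw [hx]
    exacts [(RD_isGreatest hp x).2 ⟨hf, hfx⟩, hfx.trans (RU_isLeast hp x).1.2]
  round_le {f x} hf hxf := by
    rcases h x with hx | hx <;> rw [hx]
    exacts [(RD_isGreatest hp x).1.2.trans hxf, (RU_isLeast hp x).2 ⟨hf, hxf⟩]

lemma abs_RD_le_of_nonneg (hp : 1 ≤ p) {x : ℝ} (hx : 0 ≤ x) : |RD p x| ≤ |x| :=
  abs_le_abs_of_nonneg ((RD_isGreatest hp x).2 ⟨zero_mem_Fp p, hx⟩) (RD_isGreatest hp x).1.2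

lemma abs_RU_le_of_nonpos (hp : 1 ≤ p) {x : ℝ} (hx : x ≤ 0) : |RU p x| ≤ |x| :=
  abs_le_abs_of_nonpos ((RU_isLeast hp x).2 ⟨zero_mem_Fp p, hx⟩) (RU_isLeast hp x).1.2

end DirectedRounding

namespace IsFaithfulRounding

variable {p : ℕ} {R : ℝ → ℝ} {e : ℤ} {x : ℝ}

lemma round_eq_self (hR : IsFaithfulRounding p R) (hx : x ∈ Fp p) : R x = x :=
  le_antisymm (hR.round_le hx le_rfl) (hR.le_round hx le_rfl)

lemma round_zero (hR : IsFaithfulRounding p R) : R 0 = 0 := hR.round_eq_self (zero_mem_Fp p)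

lemma round_round (hR : IsFaithfulRounding p R) (x : ℝ) : R (R x) = R x :=
  hR.round_eq_self (hR.mem x)

lemma le_abs_round (hR : IsFaithfulRounding p R) {f : ℝ} (hf : f ∈ Fp p) (h : f ≤ |x|) :
    f ≤ |R x| := by
  rcases le_abs.1 h with hx | hx
  · exact (hR.le_round hf hx).trans (le_abs_self _)
  · exact (le_neg.1 (hR.round_le (neg_mem_Fp hf) (le_neg.1 hx))).trans (neg_le_abs _)

lemma abs_sub_round_lt (hR : IsFaithfulRounding p R) (hp : 1 ≤ p) (h : InBinade p e x) :
    |x - R x| < (2 : ℝ) ^ e := by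
  obtain ⟨f, hf, hfx, hxf⟩ := h.exists_mem_Fp_le_lt_add hp
  obtain ⟨g, hg, hgx, hxg⟩ := h.neg.exists_mem_Fp_le_lt_add hp
  have hlower := hR.le_round hf hfx
  have hupper := hR.round_le (neg_mem_Fp hg) (le_neg.1 hgx)
  exact abs_sub_lt_iff.2 ⟨by linarith, by linarith⟩

lemma round_mem_dyadicGrid_of_inBinade (hR : IsFaithfulRounding p R) (hp : 1 ≤ p)
    (h : InBinade p e x) : R x ∈ dyadicGrid e :=
  mem_dyadicGrid_of_mem_Fp (hR.mem x) (hR.le_abs_round (two_zpow_mem_Fp hp _) h.zpow_le_abs)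

lemma round_mem_dyadicGrid (hR : IsFaithfulRounding p R) (hp : 1 ≤ p) (hx : x ∈ dyadicGrid e) :
    R x ∈ dyadicGrid e := by
  rcases le_or_gt |x| ((2 : ℝ) ^ ((p : ℤ) + e)) with hsmall | hlarge
  · rwa [hR.round_eq_self (mem_Fp_of_mem_dyadicGrid hp hx hsmall)]
  · obtain ⟨f, hf⟩ := exists_inBinade p (abs_pos.1 ((by positivity : (0 : ℝ) < _).trans hlarge))
    have hef : e ≤ f := by
      have := two_zpow_lt_two_zpow.1 (hlarge.trans hf.abs_lt_zpow)
      omega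
    exact dyadicGrid_antitone hef (hR.round_mem_dyadicGrid_of_inBinade hp hf)

lemma abs_sub_round_le_abs_round (hR : IsFaithfulRounding p R) (hp : 1 ≤ p) (x : ℝ) :
    |x - R x| ≤ eps p * |R x| := by
  rcases eq_or_ne x 0 with rfl | hx
  · simp only [hR.round_zero, sub_self, abs_zero, mul_zero, le_refl]
  obtain ⟨e, he⟩ := exists_inBinade p hx
  have hround := hR.le_abs_round (two_zpow_mem_Fp hp _) he.zpow_le_abs
  calc |x - R x| ≤ (2 : ℝ) ^ e := (hR.abs_sub_round_lt hp he).le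
    _ = eps p * (2 : ℝ) ^ ((p : ℤ) - 1 + e) := two_zpow_eq_eps_mul p e
    _ ≤ eps p * |R x| := mul_le_mul_of_nonneg_left hround (eps_pos p).le

lemma abs_sub_round_le (hR : IsFaithfulRounding p R) (hp : 1 ≤ p) (x : ℝ) :
    |x - R x| ≤ eps p * |x| := by
  rcases eq_or_ne x 0 with rfl | hx
  · simp only [hR.round_zero, sub_self, abs_zero, mul_zero, le_refl]
  obtain ⟨e, he⟩ := exists_inBinade p hx
  exact (hR.abs_sub_round_lt hp he).le.trans he.two_zpow_le_eps_mul

lemma abs_round_le (hR : IsFaithfulRounding p R) (hp : 1 ≤ p) (x : ℝ) :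
    |R x| ≤ (1 + eps p) * |x| := by
  have := abs_sub_abs_le_abs_sub (R x) x
  rw [abs_sub_comm] at this
  linarith [hR.abs_sub_round_le hp x]

lemma abs_sub_round_of_abs_round_le (hR : IsFaithfulRounding p R) (h : |R x| ≤ |x|) :
    |x - R x| = |x| - |R x| := by
  rcases le_total 0 x with hx | hx
  · have hRx := hR.le_round (zero_mem_Fp p) hx
    rw [abs_of_nonneg hx, abs_of_nonneg hRx] at h ⊢
    exact abs_of_nonneg (sub_nonneg.2 h)
  · have hRx := hR.round_le (zero_mem_Fp p) hx
    rw [abs_of_nonpos hx, abs_of_nonpos hRx] at h ⊢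
    rw [abs_of_nonpos (by linarith)]
    ring

lemma abs_sub_round_sub_round_le (hR : IsFaithfulRounding p R) (hp : 1 ≤ p) (x : ℝ) :
    |x - R x - R (x - R x)| ≤ eps p ^ 2 * |x| :=
  calc |x - R x - R (x - R x)| ≤ eps p * |x - R x| := hR.abs_sub_round_le hp _
    _ ≤ eps p * (eps p * |x|) :=
      mul_le_mul_of_nonneg_left (hR.abs_sub_round_le hp x) (eps_pos p).le
    _ = eps p ^ 2 * |x| := by ring

end IsFaithfulRounding

/-! ### `Fast2Sum` -/

/-- The condition under which the first subtraction of `Fast2Sum(a, b)` is exact: `b` is a `p`-bit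
integer in units of some `2 ^ e` that divides `a`. This is weaker than `|b| ≤ |a|` and survives
cancellation in `a`. -/
def Dominates (p : ℕ) (a b : ℝ) : Prop :=
  b = 0 ∨ ∃ e : ℤ, a ∈ dyadicGrid e ∧ b ∈ dyadicGrid e ∧ |b| < (2 : ℝ) ^ ((p : ℤ) + e)

section Fast2Sum

variable {p : ℕ} {R : ℝ → ℝ} {a b : ℝ}

lemma dominates_of_abs_le (ha : a ∈ Fp p) (hb : b ∈ Fp p) (h : |b| ≤ |a|) : Dominates p a b := by
  rcases eq_or_ne b 0 with hb0 | hb0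
  · exact Or.inl hb0
  · obtain ⟨e, he⟩ := exists_inBinade p hb0
    exact Or.inr ⟨e, mem_dyadicGrid_of_mem_Fp ha (he.zpow_le_abs.trans h), he.mem_dyadicGrid hb,
      he.abs_lt_zpow⟩

lemma dominates_of_mem_dyadicGrid {e : ℤ} (ha : a ∈ dyadicGrid e) (hb : b ∈ Fp p)
    (h : |b| < (2 : ℝ) ^ ((p : ℤ) + e)) : Dominates p a b := by
  rcases eq_or_ne b 0 with hb0 | hb0
  · exact Or.inl hb0
  · obtain ⟨f, hf⟩ := exists_inBinade p hb0
    have hfe : f ≤ e := by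
      have := two_zpow_lt_two_zpow.1 (hf.zpow_le_abs.trans_lt h)
      omega
    exact Or.inr ⟨f, dyadicGrid_antitone hfe ha, hf.mem_dyadicGrid hb, hf.abs_lt_zpow⟩

lemma round_add_sub_mem_of_lt_abs_add (hR : IsFaithfulRounding p R) (hp : 2 ≤ p) (ha : a ∈ Fp p)
    {e : ℤ} (hae : a ∈ dyadicGrid e) (hbe : b ∈ dyadicGrid e) (hb : |b| < (2 : ℝ) ^ ((p : ℤ) + e))
    (hlarge : (2 : ℝ) ^ ((p : ℤ) + e) < |a + b|) : R (a + b) - a ∈ Fp p := by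
  have hp1 : 1 ≤ p := by omega
  have habe := add_mem hae hbe
  obtain ⟨k, hk⟩ := exists_inBinade p (abs_pos.1 ((by positivity : (0 : ℝ) < _).trans hlarge))
  obtain ⟨j, rfl⟩ : ∃ j, k = j + 1 := ⟨k - 1, by ring⟩
  have hej : e ≤ j := by
    have := two_zpow_lt_two_zpow.1 (hlarge.trans hk.abs_lt_zpow)
    omega
  have hround := hR.round_mem_dyadicGrid_of_inBinade hp1 hk
  have herr : |a + b - R (a + b)| + (2 : ℝ) ^ e ≤ (2 : ℝ) ^ (j + 1) :=
    abs_add_two_zpow_le_of_abs_lt (sub_mem habe (hR.round_mem_dyadicGrid hp1 habe)) (by omega)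
      (hR.abs_sub_round_lt hp1 hk)
  have hbgap : |b| + (2 : ℝ) ^ e ≤ (2 : ℝ) ^ ((p : ℤ) + e) :=
    abs_add_two_zpow_le_of_abs_lt hbe (by omega) hb
  have htri : |R (a + b) - a| ≤ |b| + |a + b - R (a + b)| := by
    rw [show R (a + b) - a = b - (a + b - R (a + b)) by ring]
    exact abs_sub _ _
  -- `e < j` means that `a` dominates the sum, so that `a` lies on the coarser grid as well
  suffices a ∈ dyadicGrid j ∧ |R (a + b) - a| ≤ (2 : ℝ) ^ ((p : ℤ) + j) from
    mem_Fp_of_mem_dyadicGrid hp1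
      (sub_mem (dyadicGrid_antitone (by omega : j ≤ j + 1) hround) this.1) this.2
  have hj := two_zpow_add_one j
  rcases hej.eq_or_lt with rfl | hlt
  · exact ⟨hae, by linarith⟩
  · have hsum : (2 : ℝ) ^ ((p : ℤ) - 1 + (j + 1)) ≤ |a + b| := hk.zpow_le_abs
    have hpj := two_zpow_add_one ((p : ℤ) - 1 + j)
    have hpe : (2 : ℝ) ^ ((p : ℤ) + e) ≤ (2 : ℝ) ^ ((p : ℤ) - 1 + j) :=
      two_zpow_le_two_zpow.2 (by omega)
    have hjp : (2 : ℝ) ^ (j + 1) ≤ (2 : ℝ) ^ ((p : ℤ) - 1 + j) :=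
      two_zpow_le_two_zpow.2 (by omega)
    have he : (0 : ℝ) < (2 : ℝ) ^ e := by positivity
    rw [← add_assoc] at hsum
    rw [show (p : ℤ) + j = (p : ℤ) - 1 + j + 1 by ring]
    exact ⟨mem_dyadicGrid_of_mem_Fp ha (by linarith [abs_add_le a b]), by linarith⟩

lemma Dominates.round_add_sub_mem (hR : IsFaithfulRounding p R) (hp : 2 ≤ p) (ha : a ∈ Fp p)
    (h : Dominates p a b) : R (a + b) - a ∈ Fp p := by
  have hp1 : 1 ≤ p := by omega
  rcases h with rfl | ⟨e, hae, hbe, hb⟩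
  · rw [add_zero, hR.round_eq_self ha, sub_self]
    exact zero_mem_Fp p
  rcases le_or_gt |a + b| ((2 : ℝ) ^ ((p : ℤ) + e)) with hsmall | hlarge
  · rw [hR.round_eq_self (mem_Fp_of_mem_dyadicGrid hp1 (add_mem hae hbe) hsmall),
      add_sub_cancel_left]
    exact mem_Fp_of_mem_dyadicGrid hp1 hbe hb.le
  · exact round_add_sub_mem_of_lt_abs_add hR hp ha hae hbe hb hlarge

lemma fast2Sum_of_dominates (hR : IsFaithfulRounding p R) (hp : 2 ≤ p) (ha : a ∈ Fp p)
    (h : Dominates p a b) : fast2Sum R a b = (R (a + b), R (a + b - R (a + b))) := by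
  rw [fast2Sum, hR.round_eq_self (h.round_add_sub_mem hR hp ha),
    show b - (R (a + b) - a) = a + b - R (a + b) by ring]

lemma fast2Sum_of_add_mem (hR : IsFaithfulRounding p R) (hb : b ∈ Fp p) (h : a + b ∈ Fp p) :
    fast2Sum R a b = (a + b, 0) := by
  simp only [fast2Sum, hR.round_eq_self h, add_sub_cancel_left, hR.round_eq_self hb, sub_self,
    hR.round_zero]

lemma abs_fast2Sum_fst_add_snd_sub_le (hR : IsFaithfulRounding p R) (hp : 2 ≤ p) (ha : a ∈ Fp p)
    (h : Dominates p a b) :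
    |(fast2Sum R a b).1 + (fast2Sum R a b).2 - (a + b)| ≤ eps p ^ 2 * |a + b| := by
  rw [fast2Sum_of_dominates hR hp ha h, abs_sub_comm, ← sub_sub]
  exact hR.abs_sub_round_sub_round_le (by omega) _

/-- The rounding error is a multiple of the spacing of the smaller summand and does not exceed that
summand, because the rounded sum lies between the larger summand and the sum. -/
lemma add_sub_round_mem_Fp (hR : IsFaithfulRounding p R) (hp : 1 ≤ p) (ha : a ∈ Fp p)
    (hb : b ∈ Fp p) (hab : 0 ≤ a * b) (h : |R (a + b)| ≤ |a + b|) :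
    a + b - R (a + b) ∈ Fp p := by
  wlog hba : |b| ≤ |a| generalizing a b
  · rw [add_comm] at h ⊢
    exact this hb ha (by rwa [mul_comm]) h (not_le.1 hba).le
  rcases eq_or_ne b 0 with rfl | hb0
  · rw [add_zero, hR.round_eq_self ha, sub_self]
    exact zero_mem_Fp p
  obtain ⟨e, he⟩ := exists_inBinade p hb0
  have hsum := add_mem (mem_dyadicGrid_of_mem_Fp ha (he.zpow_le_abs.trans hba))
    (he.mem_dyadicGrid hb)
  have ha_le : |a| ≤ |R (a + b)| :=
    hR.le_abs_round (abs_mem_Fp ha) (sq_le_sq.1 (by nlinarith [sq_nonneg b]))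
  have herr : |a + b - R (a + b)| ≤ |b| := by
    rw [hR.abs_sub_round_of_abs_round_le h]
    linarith [abs_add_le a b]
  exact mem_Fp_of_mem_dyadicGrid hp (sub_mem hsum (hR.round_mem_dyadicGrid hp hsum))
    (herr.trans he.abs_lt_zpow.le)

lemma fast2Sum_of_mul_nonneg (hR : IsFaithfulRounding p R) (hp : 2 ≤ p) (ha : a ∈ Fp p)
    (hb : b ∈ Fp p) (hba : |b| ≤ |a|) (hab : 0 ≤ a * b) (h : |R (a + b)| ≤ |a + b|) :
    fast2Sum R a b = (R (a + b), a + b - R (a + b)) := by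
  rw [fast2Sum_of_dominates hR hp ha (dominates_of_abs_le ha hb hba),
    hR.round_eq_self (add_sub_round_mem_Fp hR (by omega) ha hb hab h)]

end Fast2Sum

/-! ### `2Sum` -/

section TwoSum

variable {p : ℕ} {R : ℝ → ℝ} {a b : ℝ}

lemma twoSum_of_add_mem (hR : IsFaithfulRounding p R) (ha : a ∈ Fp p) (hb : b ∈ Fp p)
    (h : a + b ∈ Fp p) : twoSum R a b = (a + b, 0) := by
  simp only [twoSum, hR.round_eq_self h, add_sub_cancel_right, hR.round_eq_self ha,
    add_sub_cancel_left, hR.round_eq_self hb, sub_self, hR.round_zero, add_zero]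

lemma twoSum_snd_mem_dyadicGrid (hR : IsFaithfulRounding p R) (hp : 1 ≤ p) {e : ℤ}
    (ha : a ∈ dyadicGrid e) (hb : b ∈ dyadicGrid e) : (twoSum R a b).2 ∈ dyadicGrid e := by
  have round_mem {x : ℝ} (hx : x ∈ dyadicGrid e) := hR.round_mem_dyadicGrid hp hx
  have hs := round_mem (add_mem ha hb)
  have ha' := round_mem (sub_mem hs hb)
  have hb' := round_mem (sub_mem hs ha')
  exact round_mem (add_mem (round_mem (sub_mem ha ha')) (round_mem (sub_mem hb hb')))

lemma twoSum_snd_of_abs_le (hR : IsFaithfulRounding p R) (hp : 2 ≤ p) (ha : a ∈ Fp p)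
    (hb : b ∈ Fp p) (hab : |a| ≤ |b|) : (twoSum R a b).2 = R (a + b - R (a + b)) := by
  have ha' : R (a + b) - b ∈ Fp p := by
    rw [add_comm]
    exact (dominates_of_abs_le hb ha hab).round_add_sub_mem hR hp hb
  simp only [twoSum, hR.round_eq_self ha', sub_sub_cancel, hR.round_eq_self hb, sub_self,
    hR.round_zero, add_zero, hR.round_round]
  congr 1
  ring

lemma abs_le_abs_round_add (hR : IsFaithfulRounding p R) (hp : 1 ≤ p) (ha : a ∈ Fp p)
    (hb : b ∈ Fp p) (hba : |b| ≤ |a|) (hex : a + b ∉ Fp p) : |b| ≤ |R (a + b)| := by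
  rcases le_or_gt |b| |a + b| with hle | hlt
  · exact hR.le_abs_round (abs_mem_Fp hb) hle
  -- otherwise the sum is a short multiple of the spacing of `b`, hence exact
  obtain ⟨e, he⟩ := exists_inBinade p (abs_pos.1 ((abs_nonneg _).trans_lt hlt))
  refine absurd (mem_Fp_of_mem_dyadicGrid hp (add_mem ?_ (he.mem_dyadicGrid hb))
    (hlt.trans he.abs_lt_zpow).le) hex
  exact mem_dyadicGrid_of_mem_Fp ha (he.zpow_le_abs.trans hba)

lemma twoSum_snd_of_abs_le_abs_round (hR : IsFaithfulRounding p R) (hp : 2 ≤ p) (hb : b ∈ Fp p)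
    (hbs : |b| ≤ |R (a + b)|) :
    (twoSum R a b).2 =
      R (R (a - R (R (a + b) - b)) + R (b - (R (a + b) - R (R (a + b) - b)))) := by
  have hdom := dominates_of_abs_le (hR.mem (a + b)) (neg_mem_Fp hb) (by rwa [abs_neg])
  have hb' := neg_mem_Fp (hdom.round_add_sub_mem hR hp (hR.mem _))
  rw [neg_sub, ← sub_eq_add_neg] at hb'
  simp only [twoSum, hR.round_eq_self hb']

/-- With `b' = s - a'` exact, the residuals `a - a'` and `b - b'` add up to the rounding error of
`a + b`; only their two roundings and the final one contribute. -/
lemma abs_twoSum_snd_sub_le_of_abs_le_abs_round (hR : IsFaithfulRounding p R) (hp : 2 ≤ p)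
    (hb : b ∈ Fp p) (hbs : |b| ≤ |R (a + b)|) :
    |(twoSum R a b).2 - (a + b - R (a + b))| ≤
      (6 * eps p ^ 2 + 5 * eps p ^ 3) * |R (a + b)| := by
  have hp1 : 1 ≤ p := by omega
  have hu := eps_pos p
  rw [twoSum_snd_of_abs_le_abs_round hR hp hb hbs]
  set u := eps p
  set s := R (a + b)
  set a' := R (s - b)
  have hs : |a + b - s| ≤ u * |s| := hR.abs_sub_round_le_abs_round hp1 _
  have ha' : |s - b - a'| ≤ 2 * u * |s| :=
    calc |s - b - a'| ≤ u * |s - b| := hR.abs_sub_round_le hp1 _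
      _ ≤ u * (|s| + |s|) := by gcongr; linarith [abs_sub s b]
      _ = 2 * u * |s| := by ring
  have hδa : |a - a' - R (a - a')| ≤ 3 * u ^ 2 * |s| :=
    calc |a - a' - R (a - a')| ≤ u * |a - a'| := hR.abs_sub_round_le hp1 _
      _ = u * |(a + b - s) + (s - b - a')| := by ring_nf
      _ ≤ u * (u * |s| + 2 * u * |s|) := by gcongr; linarith [abs_add_le (a + b - s) (s - b - a')]
      _ = 3 * u ^ 2 * |s| := by ring
  have hδb : |b - (s - a') - R (b - (s - a'))| ≤ 2 * u ^ 2 * |s| :=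
    calc |b - (s - a') - R (b - (s - a'))| ≤ u * |b - (s - a')| := hR.abs_sub_round_le hp1 _
      _ = u * |s - b - a'| := by rw [← abs_neg]; ring_nf
      _ ≤ u * (2 * u * |s|) := by gcongr
      _ = 2 * u ^ 2 * |s| := by ring
  set δa := R (a - a')
  set δb := R (b - (s - a'))
  have hδ : |δa + δb - (a + b - s)| ≤ 5 * u ^ 2 * |s| := by
    rw [show δa + δb - (a + b - s) = -((a - a' - δa) + (b - (s - a') - δb)) by ring, abs_neg]
    linarith [abs_add_le (a - a' - δa) (b - (s - a') - δb)]
  have hlast : |δa + δb - R (δa + δb)| ≤ u * (u * |s| + 5 * u ^ 2 * |s|) :=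
    (hR.abs_sub_round_le hp1 _).trans <| by
      gcongr
      linarith [abs_sub_abs_le_abs_sub (δa + δb) (a + b - s)]
  calc |R (δa + δb) - (a + b - s)|
      = |(δa + δb - (a + b - s)) - (δa + δb - R (δa + δb))| := by ring_nf
    _ ≤ 5 * u ^ 2 * |s| + u * (u * |s| + 5 * u ^ 2 * |s|) := (abs_sub _ _).trans (by linarith)
    _ = (6 * u ^ 2 + 5 * u ^ 3) * |s| := by ring

lemma abs_twoSum_snd_sub_le (hR : IsFaithfulRounding p R) (hp : 2 ≤ p) (ha : a ∈ Fp p)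
    (hb : b ∈ Fp p) :
    |(twoSum R a b).2 - (a + b - R (a + b))| ≤
      (6 * eps p ^ 2 + 5 * eps p ^ 3) * |R (a + b)| := by
  have hp1 : 1 ≤ p := by omega
  have hu := eps_pos p
  by_cases hex : a + b ∈ Fp p
  · rw [twoSum_of_add_mem hR ha hb hex, hR.round_eq_self hex, sub_self, sub_self, abs_zero]
    positivity
  rcases le_total |a| |b| with hab | hba
  · rw [twoSum_snd_of_abs_le hR hp ha hb hab, abs_sub_comm]
    calc |a + b - R (a + b) - R (a + b - R (a + b))|
        ≤ eps p * |a + b - R (a + b)| := hR.abs_sub_round_le hp1 _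
      _ ≤ eps p * (eps p * |R (a + b)|) := by gcongr; exact hR.abs_sub_round_le_abs_round hp1 _
      _ = eps p ^ 2 * |R (a + b)| := by ring
      _ ≤ (6 * eps p ^ 2 + 5 * eps p ^ 3) * |R (a + b)| := by
        gcongr
        linarith [pow_pos hu 2, pow_pos hu 3]
  · exact abs_twoSum_snd_sub_le_of_abs_le_abs_round hR hp hb
      (abs_le_abs_round_add hR hp1 ha hb hba hex)

lemma abs_twoSum_snd_sub_le_mul_abs_add (hR : IsFaithfulRounding p R) (hp : 6 ≤ p)
    (ha : a ∈ Fp p) (hb : b ∈ Fp p) :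
    |(twoSum R a b).2 - (a + b - R (a + b))| ≤ (6 * eps p ^ 2 + 12 * eps p ^ 3) * |a + b| := by
  have hu := eps_pos p
  have hu32 := eps_le_one_div_32 hp
  have herr := abs_twoSum_snd_sub_le hR (by omega) ha hb
  set u := eps p
  calc _ ≤ (6 * u ^ 2 + 5 * u ^ 3) * |R (a + b)| := herr
    _ ≤ (6 * u ^ 2 + 5 * u ^ 3) * ((1 + u) * |a + b|) := by
      gcongr
      exact hR.abs_round_le (by omega) _
    _ = (6 * u ^ 2 + (11 + 5 * u) * u ^ 3) * |a + b| := by ring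
    _ ≤ (6 * u ^ 2 + 12 * u ^ 3) * |a + b| := by gcongr; linarith

lemma abs_twoSum_snd_le (hR : IsFaithfulRounding p R) (hp : 6 ≤ p) (ha : a ∈ Fp p)
    (hb : b ∈ Fp p) : |(twoSum R a b).2| ≤ (eps p + 7 * eps p ^ 2) * |a + b| := by
  have hu := eps_pos p
  have hu32 := eps_le_one_div_32 hp
  have herr := abs_twoSum_snd_sub_le_mul_abs_add hR hp ha hb
  have hround := hR.abs_sub_round_le (by omega) (a + b)
  set u := eps p
  calc |(twoSum R a b).2|
      ≤ |a + b - R (a + b)| + |(twoSum R a b).2 - (a + b - R (a + b))| := by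
        linarith [abs_sub_abs_le_abs_sub (twoSum R a b).2 (a + b - R (a + b))]
    _ ≤ u * |a + b| + (6 * u ^ 2 + 12 * u ^ 3) * |a + b| := add_le_add hround herr
    _ = (u + (6 + 12 * u) * u ^ 2) * |a + b| := by ring
    _ ≤ (u + 7 * u ^ 2) * |a + b| := by gcongr; linarith

end TwoSum

/-! ### Merging the two sums -/

/-- The steps of accurate double-word addition that follow the two initial sums
`s = (s_h, s_l)` of the high parts and `t = (t_h, t_l)` of the low parts. -/
noncomputable def mergeSums (R : ℝ → ℝ) (s t : ℝ × ℝ) : ℝ × ℝ :=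
  let v := fast2Sum R s.1 (R (s.2 + t.1))
  fast2Sum R v.1 (R (t.2 + v.2))

section MergeSums

variable {p : ℕ} {R : ℝ → ℝ}

lemma modAccurateAdd_eq_mergeSums (hR : IsFaithfulRounding p R) (hp : 2 ≤ p) {xh xl yh yl : ℝ}
    (hxl : xl ∈ Fp p) (hyl : yl ∈ Fp p) (hsign : 0 ≤ xl * yl) (h : |R (xl + yl)| ≤ |xl + yl|) :
    modAccurateAdd R xh xl yh yl =
      mergeSums R (twoSum R xh yh) (R (xl + yl), xl + yl - R (xl + yl)) := by
  have ht : (if |yl| ≤ |xl| then fast2Sum R xl yl else fast2Sum R yl xl) =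
      (R (xl + yl), xl + yl - R (xl + yl)) := by
    split_ifs with hle
    · exact fast2Sum_of_mul_nonneg hR hp hxl hyl hle hsign h
    · rw [add_comm xl yl] at h ⊢
      rw [mul_comm] at hsign
      exact fast2Sum_of_mul_nonneg hR hp hyl hxl (not_le.1 hle).le hsign h
  rw [modAccurateAdd, ht]
  rfl

lemma IsFaithfulRounding.abs_round_sub_round_le (hR : IsFaithfulRounding p R) (hp : 1 ≤ p)
    (x : ℝ) : |R (x - R x)| ≤ (eps p + eps p ^ 2) * |x| := by
  linarith [abs_sub_abs_le_abs_sub (R (x - R x)) (x - R x), abs_sub_comm (R (x - R x)) (x - R x),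
    hR.abs_sub_round_le hp x, hR.abs_sub_round_sub_round_le hp x]

lemma IsFaithfulRounding.abs_round_add_round_add_sub_le (hR : IsFaithfulRounding p R) (hp : 1 ≤ p)
    (x y : ℝ) :
    |R x + R (y + R (x - R x)) - (x + y)| ≤
      (2 * eps p ^ 2 + eps p ^ 3) * |x| + eps p * |y| := by
  have hu := eps_pos p
  have herr := hR.abs_sub_round_sub_round_le hp x
  set u := eps p
  set l := R (x - R x)
  have hw : |y + l - R (y + l)| ≤ u * |y| + (u ^ 2 + u ^ 3) * |x| :=
    calc |y + l - R (y + l)| ≤ u * |y + l| := hR.abs_sub_round_le hp _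
      _ ≤ u * (|y| + (u + u ^ 2) * |x|) := by
        gcongr
        exact (abs_add_le _ _).trans (by gcongr; exact hR.abs_round_sub_round_le hp x)
      _ = u * |y| + (u ^ 2 + u ^ 3) * |x| := by ring
  rw [show R x + R (y + l) - (x + y) = -((x - R x - l) + (y + l - R (y + l))) by ring, abs_neg]
  linarith [abs_add_le (x - R x - l) (y + l - R (y + l))]

lemma IsFaithfulRounding.abs_round_add_round_le_abs_round (hR : IsFaithfulRounding p R)
    (hp : 6 ≤ p) {x y : ℝ} (h : |y| ≤ |x| / 2) : |R (y + R (x - R x))| ≤ |R x| := by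
  have hp1 : 1 ≤ p := by omega
  have hu := eps_pos p
  have hu32 := eps_le_one_div_32 hp
  have hl := hR.abs_round_sub_round_le hp1 x
  have hx := hR.abs_sub_round_le hp1 x
  set u := eps p
  set l := R (x - R x)
  calc |R (y + l)| ≤ (1 + u) * |y + l| := hR.abs_round_le hp1 _
    _ ≤ (1 + u) * (|x| / 2 + (u + u ^ 2) * |x|) := by
      gcongr
      exact (abs_add_le y l).trans (add_le_add h hl)
    _ ≤ (1 + 1 / 32) * (|x| / 2 + (1 / 32 + (1 / 32) ^ 2) * |x|) := by gcongr
    _ ≤ |x| - 1 / 32 * |x| := by linarith [abs_nonneg x]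
    _ ≤ |x| - u * |x| := by gcongr
    _ ≤ |R x| := by linarith [abs_sub_abs_le_abs_sub x (R x)]

/-- The error has three sources: the first `Fast2Sum`, the rounding of `w = t_l + v_l`, and the
final `Fast2Sum`. -/
lemma abs_mergeSums_sub_le (hR : IsFaithfulRounding p R) (hp : 6 ≤ p) {s t : ℝ × ℝ}
    (hs : s.1 ∈ Fp p) (hdom : Dominates p s.1 (R (s.2 + t.1)))
    (ht : |t.2| ≤ |s.1 + R (s.2 + t.1)| / 2) :
    |(mergeSums R s t).1 + (mergeSums R s t).2 - (s.1 + R (s.2 + t.1) + t.2)| ≤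
      (3 * eps p ^ 2 + 2 * eps p ^ 3) * |s.1 + R (s.2 + t.1)| + 2 * eps p * |t.2| := by
  have hu := eps_pos p
  have hu32 := eps_le_one_div_32 hp
  simp only [mergeSums, fast2Sum_of_dominates hR (by omega : 2 ≤ p) hs hdom]
  set u := eps p
  set A := s.1 + R (s.2 + t.1)
  set v := R A
  set w := R (t.2 + R (A - v))
  have hvw : |v + w - (A + t.2)| ≤ (2 * u ^ 2 + u ^ 3) * |A| + u * |t.2| :=
    hR.abs_round_add_round_add_sub_le (by omega) A t.2
  have hvw_le : |v + w| ≤ (1 + 2 * u ^ 2 + u ^ 3) * |A| + (1 + u) * |t.2| := by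
    linarith [abs_sub_abs_le_abs_sub (v + w) (A + t.2), abs_add_le A t.2]
  have hwv : |w| ≤ |v| := hR.abs_round_add_round_le_abs_round hp ht
  have hlast : |(fast2Sum R v w).1 + (fast2Sum R v w).2 - (v + w)| ≤
      u ^ 2 * ((1 + 2 * u ^ 2 + u ^ 3) * |A| + (1 + u) * |t.2|) :=
    (abs_fast2Sum_fst_add_snd_sub_le hR (by omega) (hR.mem A)
      (dominates_of_abs_le (hR.mem A) (hR.mem _) hwv)).trans (by gcongr)
  calc _ ≤ _ := abs_sub_le _ (v + w) _
    _ ≤ u ^ 2 * ((1 + 2 * u ^ 2 + u ^ 3) * |A| + (1 + u) * |t.2|) +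
        ((2 * u ^ 2 + u ^ 3) * |A| + u * |t.2|) := add_le_add hlast hvw
    _ = (3 * u ^ 2 + (1 + 2 * u + u ^ 2) * u ^ 3) * |A| + (1 + u + u ^ 2) * u * |t.2| := by ring
    _ ≤ (3 * u ^ 2 + 2 * u ^ 3) * |A| + 2 * u * |t.2| := by gcongr <;> nlinarith

end MergeSums

/-! ### High parts that cancel -/

section Cancellation

variable {p : ℕ} {R : ℝ → ℝ}

lemma abs_add_abs_le_abs_add_add_two_mul_min (a b : ℝ) :
    |a| + |b| ≤ |a + b| + 2 * min |a| |b| := by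
  rcases le_total |a| |b| with h | h
  · rw [min_eq_left h]
    linarith [abs_add' b a]
  · rw [min_eq_right h, add_comm a b]
    linarith [abs_add' a b]

lemma add_mem_dyadicGrid_of_le_min {a b : ℝ} (ha : a ∈ Fp p) (hb : b ∈ Fp p) {e : ℤ}
    (h : (2 : ℝ) ^ ((p : ℤ) - 1 + e) ≤ min |a| |b|) : a + b ∈ dyadicGrid e :=
  add_mem (mem_dyadicGrid_of_mem_Fp ha (h.trans (min_le_left _ _)))
    (mem_dyadicGrid_of_mem_Fp hb (h.trans (min_le_right _ _)))

lemma add_mem_Fp_of_abs_add_le_min (hp : 1 ≤ p) {a b : ℝ} (ha : a ∈ Fp p) (hb : b ∈ Fp p)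
    (h : |a + b| ≤ min |a| |b|) : a + b ∈ Fp p := by
  rcases eq_or_ne (min |a| |b|) 0 with h0 | h0
  · rw [abs_nonpos_iff.1 (h.trans_eq h0)]
    exact zero_mem_Fp p
  · obtain ⟨e, he⟩ := exists_inBinade p h0
    have habs : |(min |a| |b|)| = min |a| |b| := abs_of_nonneg (by positivity)
    exact mem_Fp_of_mem_dyadicGrid hp
      (add_mem_dyadicGrid_of_le_min ha hb (habs ▸ he.zpow_le_abs))
      (h.trans (habs ▸ he.abs_lt_zpow.le))

lemma abs_mergeSums_sub_le_of_add_mem (hR : IsFaithfulRounding p R) (hp : 2 ≤ p) {s : ℝ}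
    {t : ℝ × ℝ} (ht₁ : t.1 ∈ Fp p) (ht₂ : t.2 ∈ Fp p) (hs : s + t.1 ∈ Fp p)
    (hdom : Dominates p (s + t.1) t.2) :
    |(mergeSums R (s, 0) t).1 + (mergeSums R (s, 0) t).2 - (s + t.1 + t.2)| ≤
      eps p ^ 2 * |s + t.1 + t.2| := by
  simp only [mergeSums, zero_add, hR.round_eq_self ht₁, fast2Sum_of_add_mem hR ht₁ hs, add_zero,
    hR.round_eq_self ht₂]
  exact abs_fast2Sum_fst_add_snd_sub_le hR hp hs hdom

/-- An exact high sum lying on the grid of `T` either absorbs `R T` exactly or is so large that the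
part of `T` lost in `R T` is at most half an ulp of it. -/
lemma abs_mergeSums_sub_le_of_mem_dyadicGrid (hR : IsFaithfulRounding p R) (hp : 6 ≤ p) {s T : ℝ}
    (hs : s ∈ Fp p) {e : ℤ} (hT : InBinade p e T) (hse : s ∈ dyadicGrid e) (hle : |R T| ≤ |T|)
    (herr : T - R T ∈ Fp p) :
    |(mergeSums R (s, 0) (R T, T - R T)).1 + (mergeSums R (s, 0) (R T, T - R T)).2 - (s + T)| ≤
      5 * eps p ^ 2 * |s + T| := by
  have hp1 : 1 ≤ p := by omega
  have hu := eps_pos p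
  have hu32 := eps_le_one_div_32 hp
  have hsplit : s + T = s + R T + (T - R T) := by ring
  have hsR : s + R T ∈ dyadicGrid e := add_mem hse (hR.round_mem_dyadicGrid_of_inBinade hp1 hT)
  have htail : |T - R T| < (2 : ℝ) ^ e := hR.abs_sub_round_lt hp1 hT
  rcases le_or_gt |s + R T| ((2 : ℝ) ^ ((p : ℤ) + e)) with hsmall | hlarge
  · have hdom : Dominates p (s + R T) (T - R T) :=
      dominates_of_mem_dyadicGrid hsR herr (htail.trans_le (two_zpow_le_two_zpow.2 (by omega)))
    rw [hsplit]
    refine (abs_mergeSums_sub_le_of_add_mem hR (by omega) (hR.mem T) herr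
      (mem_Fp_of_mem_dyadicGrid hp1 hsR hsmall) hdom).trans ?_
    gcongr
    linarith [sq_nonneg (eps p)]
  · have htail_le : |T - R T| ≤ eps p / 2 * |s + R T| := by
      rw [two_zpow_eq_half_eps_mul p] at htail
      exact htail.le.trans (by gcongr)
    have hmerge := abs_mergeSums_sub_le hR hp (s := (s, 0)) (t := (R T, T - R T)) hs
    simp only [zero_add, hR.round_round, ← hsplit] at hmerge
    set A := s + R T
    set u := eps p
    have hA_le : |A| ≤ 64 / 63 * |s + T| := by
      have htri := abs_sub (s + T) (T - R T)
      rw [hsplit, add_sub_cancel_right, ← hsplit] at htri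
      have : u / 2 * |A| ≤ 1 / 64 * |A| :=
        mul_le_mul_of_nonneg_right (by linarith) (abs_nonneg A)
      linarith
    calc _ ≤ (3 * u ^ 2 + 2 * u ^ 3) * |A| + 2 * u * |T - R T| :=
          hmerge (dominates_of_mem_dyadicGrid hse (hR.mem T) (hle.trans_lt hT.abs_lt_zpow))
            (htail_le.trans (by nlinarith [abs_nonneg A]))
      _ ≤ (3 * u ^ 2 + 2 * u ^ 3) * |A| + 2 * u * (u / 2 * |A|) := by gcongr
      _ = (4 + 2 * u) * u ^ 2 * |A| := by ring
      _ ≤ (4 + 2 * (1 / 32)) * u ^ 2 * (64 / 63 * |s + T|) := by gcongr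
      _ ≤ 5 * u ^ 2 * |s + T| := by nlinarith [mul_nonneg (sq_nonneg u) (abs_nonneg (s + T))]

/-- A sum that is small compared with its summands is exact and, like the summands, lies on every
grid that is fine enough for the smaller of them. -/
lemma abs_mergeSums_twoSum_sub_le_of_cancel (hR : IsFaithfulRounding p R) (hp : 6 ≤ p) {a b T : ℝ}
    (ha : a ∈ Fp p) (hb : b ∈ Fp p) (hcancel : 3 * |a + b| ≤ |a| + |b|)
    (hT : 3 * |T| ≤ |a| + |b|) (hle : |R T| ≤ |T|) (herr : T - R T ∈ Fp p) :
    |(mergeSums R (twoSum R a b) (R T, T - R T)).1 +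
        (mergeSums R (twoSum R a b) (R T, T - R T)).2 - (a + b + T)| ≤
      5 * eps p ^ 2 * |a + b + T| := by
  have hp1 : 1 ≤ p := by omega
  have hmin := abs_add_abs_le_abs_add_add_two_mul_min a b
  have hsum : a + b ∈ Fp p := add_mem_Fp_of_abs_add_le_min hp1 ha hb (by linarith)
  rw [twoSum_of_add_mem hR ha hb hsum]
  rcases eq_or_ne T 0 with rfl | hT0
  · simp only [hR.round_zero, sub_zero]
    have := abs_mergeSums_sub_le_of_add_mem hR (by omega) (s := a + b) (t := (0, 0))
      (zero_mem_Fp p) (zero_mem_Fp p) (by rwa [add_zero]) (Or.inl rfl)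
    simp only [add_zero] at this ⊢
    exact this.trans (by gcongr; linarith [sq_nonneg (eps p)])
  · obtain ⟨e, he⟩ := exists_inBinade p hT0
    exact abs_mergeSums_sub_le_of_mem_dyadicGrid hR hp hsum he
      (add_mem_dyadicGrid_of_le_min ha hb (he.zpow_le_abs.trans (by linarith))) hle herr

end Cancellation

/-! ### High parts that do not cancel -/

section NoCancellation

variable {p : ℕ} {R : ℝ → ℝ}

/-- In the middle alternative `t` does not dominate the sum; in the last one it does, so that the
sum lies on a grid only one step finer than its binade and loses at most half an ulp. -/
lemma IsFaithfulRounding.abs_sub_round_add_cases (hR : IsFaithfulRounding p R) (hp : 1 ≤ p) {e : ℤ}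
    {s t : ℝ} (hs : s ∈ dyadicGrid e) (ht : t ∈ Fp p) :
    (2 : ℝ) ^ ((p : ℤ) + e) ≤ |s + t| ∨ |s + t - R (s + t)| ≤ 2 * eps p * |s| ∨
      |s + t - R (s + t)| ≤ eps p / 2 * |s + t| := by
  have hu := eps_pos p
  rcases le_or_gt |s + t| (2 * |s|) with hle | hgt
  · refine Or.inr (Or.inl ((hR.abs_sub_round_le hp _).trans ?_))
    linarith [mul_le_mul_of_nonneg_left hle hu.le]
  obtain ⟨k, hk⟩ := exists_inBinade p (abs_pos.1 ((by positivity : 0 ≤ 2 * |s|).trans_lt hgt))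
  obtain ⟨j, rfl⟩ : ∃ j, k = j + 1 := ⟨k - 1, by ring⟩
  have hk_le : (2 : ℝ) ^ ((p : ℤ) + j) ≤ |s + t| := by
    simpa only [show (p : ℤ) - 1 + (j + 1) = p + j by ring] using hk.zpow_le_abs
  rcases le_or_gt e j with hej | hje
  · exact Or.inl ((two_zpow_le_two_zpow.2 (by omega)).trans hk_le)
  · refine Or.inr (Or.inr ?_)
    have ht_large : (2 : ℝ) ^ ((p : ℤ) - 1 + j) ≤ |t| := by
      have := two_zpow_add_one ((p : ℤ) - 1 + j)
      rw [show (p : ℤ) - 1 + j + 1 = p + j by ring] at this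
      linarith [abs_add_le s t]
    have hst := add_mem (dyadicGrid_antitone hje.le hs) (mem_dyadicGrid_of_mem_Fp ht ht_large)
    have herr : |s + t - R (s + t)| + (2 : ℝ) ^ j ≤ (2 : ℝ) ^ (j + 1) :=
      abs_add_two_zpow_le_of_abs_lt (sub_mem hst (hR.round_mem_dyadicGrid hp hst)) (by omega)
        (hR.abs_sub_round_lt hp hk)
    calc |s + t - R (s + t)| ≤ (2 : ℝ) ^ j := by linarith [two_zpow_add_one j]
      _ = eps p / 2 * (2 : ℝ) ^ ((p : ℤ) + j) := two_zpow_eq_half_eps_mul p j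
      _ ≤ eps p / 2 * |s + t| := by gcongr

variable {a b t q σ : ℝ}

lemma nonneg_and_le_mul_of_no_cancel {N W : ℝ} (hN : 0 ≤ N) (hq0 : 0 ≤ q) (hq : q ≤ 1 / 6)
    (hW : W ≤ 3 * N) (hσ : N ≤ σ + q * W) : 0 ≤ σ ∧ N ≤ (1 + 6 * q) * σ := by
  have hqW : q * W ≤ 3 * (q * N) := by linarith [mul_le_mul_of_nonneg_left hW hq0]
  have hqN : q * N ≤ 1 / 6 * N := by gcongr
  refine ⟨by linarith, ?_⟩
  calc N ≤ N + 3 * (1 - 6 * q) * (q * N) := by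
        linarith [mul_nonneg (by linarith : 0 ≤ 1 - 6 * q) (mul_nonneg hq0 hN)]
    _ = (1 + 6 * q) * (N - 3 * (q * N)) := by ring
    _ ≤ (1 + 6 * q) * σ := by gcongr; linarith

lemma abs_twoSum_snd_le_of_no_cancel (hR : IsFaithfulRounding p R) (hp : 6 ≤ p) (ha : a ∈ Fp p)
    (hb : b ∈ Fp p) (hq : q ≤ 1 / 6) (hσ : 0 ≤ σ) (hN : |a + b| ≤ (1 + 6 * q) * σ) :
    |(twoSum R a b).2| ≤ (eps p + 14 * eps p ^ 2 + 6 * eps p * q) * σ := by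
  have hu := eps_pos p
  have hs := abs_twoSum_snd_le hR hp ha hb
  set u := eps p
  calc |(twoSum R a b).2| ≤ (u + 7 * u ^ 2) * |a + b| := hs
    _ ≤ (u + 7 * u ^ 2) * ((1 + 6 * q) * σ) := by gcongr
    _ = (u + 7 * (1 + 6 * q) * u ^ 2 + 6 * u * q) * σ := by ring
    _ ≤ (u + 14 * u ^ 2 + 6 * u * q) * σ := by gcongr; linarith

lemma abs_twoSum_snd_sub_le_of_no_cancel (hR : IsFaithfulRounding p R) (hp : 6 ≤ p)
    (ha : a ∈ Fp p) (hb : b ∈ Fp p) (hq : q ≤ 1 / 6) (hσ : 0 ≤ σ)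
    (hN : |a + b| ≤ (1 + 6 * q) * σ) :
    |(twoSum R a b).2 - (a + b - R (a + b))| ≤
      (6 * eps p ^ 2 + 36 * eps p ^ 2 * q + 24 * eps p ^ 3) * σ := by
  have hu := eps_pos p
  have hδ := abs_twoSum_snd_sub_le_mul_abs_add hR hp ha hb
  set u := eps p
  calc _ ≤ (6 * u ^ 2 + 12 * u ^ 3) * |a + b| := hδ
    _ ≤ (6 * u ^ 2 + 12 * u ^ 3) * ((1 + 6 * q) * σ) := by gcongr
    _ = (6 * u ^ 2 + 36 * u ^ 2 * q + 12 * (1 + 6 * q) * u ^ 3) * σ := by ring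
    _ ≤ (6 * u ^ 2 + 36 * u ^ 2 * q + 24 * u ^ 3) * σ := by gcongr; linarith

lemma abs_add_abs_le_of_min_le (hR : IsFaithfulRounding p R) (hp : 6 ≤ p) (ha : a ∈ Fp p)
    (hb : b ∈ Fp p) (hq : q ≤ 1 / 6) (ht : |t| ≤ q * (|a| + |b|))
    (hσ : |a + b| ≤ σ + q * (|a| + |b|)) (hmin : min |a| |b| ≤ |(twoSum R a b).2 + t|) :
    |a| + |b| ≤ 3 * σ := by
  have hs : |(twoSum R a b).2| ≤ 1 / 16 * |a + b| :=
    (abs_twoSum_snd_le hR hp ha hb).trans <| by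
      gcongr
      nlinarith [eps_pos p, eps_le_one_div_32 hp]
  have hqW : q * (|a| + |b|) ≤ 1 / 6 * (|a| + |b|) := by gcongr
  linarith [abs_add_abs_le_abs_add_add_two_mul_min a b, abs_add_le (twoSum R a b).2 t,
    abs_nonneg a, abs_nonneg b]

lemma min_abs_le_or_abs_sub_round_le (hR : IsFaithfulRounding p R) (hp : 2 ≤ p) (ha : a ∈ Fp p)
    (hb : b ∈ Fp p) (ht : t ∈ Fp p) :
    min |a| |b| ≤ |(twoSum R a b).2 + t| ∨
      |(twoSum R a b).2 + t - R ((twoSum R a b).2 + t)| ≤ 2 * eps p * |(twoSum R a b).2| ∨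
        |(twoSum R a b).2 + t - R ((twoSum R a b).2 + t)| ≤
          eps p / 2 * |(twoSum R a b).2 + t| := by
  rcases eq_or_ne (min |a| |b|) 0 with h0 | h0
  · exact Or.inl (h0.trans_le (abs_nonneg _))
  obtain ⟨e, he⟩ := exists_inBinade p h0
  have habs : |(min |a| |b|)| = min |a| |b| := abs_of_nonneg (by positivity)
  have hmin := habs ▸ he.zpow_le_abs
  refine (hR.abs_sub_round_add_cases (by omega) (twoSum_snd_mem_dyadicGrid hR (by omega)
    (mem_dyadicGrid_of_mem_Fp ha (hmin.trans (min_le_left _ _)))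
    (mem_dyadicGrid_of_mem_Fp hb (hmin.trans (min_le_right _ _)))) ht).imp_left fun h => ?_
  exact (habs ▸ he.abs_lt_zpow.le).trans h

lemma abs_twoSum_snd_add_sub_round_le (hR : IsFaithfulRounding p R) (hp : 6 ≤ p) (ha : a ∈ Fp p)
    (hb : b ∈ Fp p) (ht : t ∈ Fp p) (hq0 : 0 ≤ q) (hq : q ≤ 1 / 6)
    (htW : |t| ≤ q * (|a| + |b|)) (hW : |a| + |b| ≤ 3 * |a + b|)
    (hσ : |a + b| ≤ σ + q * (|a| + |b|)) :
    |(twoSum R a b).2 + t - R ((twoSum R a b).2 + t)| ≤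
      (3 * q * eps p + 2 * eps p ^ 2 + 12 * eps p ^ 2 * q + 28 * eps p ^ 3) * σ := by
  have hu := eps_pos p
  obtain ⟨hσ0, hN⟩ := nonneg_and_le_mul_of_no_cancel (abs_nonneg _) hq0 hq hW hσ
  have hs := abs_twoSum_snd_le_of_no_cancel hR hp ha hb hq hσ0 hN
  have hround := hR.abs_sub_round_le (by omega) ((twoSum R a b).2 + t)
  have hst := abs_add_le (twoSum R a b).2 t
  have hWσ : |a| + |b| ≤ 6 * σ := by nlinarith
  set s := (twoSum R a b).2
  set u := eps p
  have h₁ : min |a| |b| ≤ |s + t| → u * |s + t| ≤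
      u * ((u + 14 * u ^ 2 + 6 * u * q) * σ + q * (3 * σ)) := fun hmin => by
    have hWσ := abs_add_abs_le_of_min_le hR hp ha hb hq htW hσ hmin
    gcongr
    exact hst.trans (add_le_add hs (htW.trans (by gcongr)))
  have h₂ : 2 * u * |s| ≤ 2 * u * ((u + 14 * u ^ 2 + 6 * u * q) * σ) := by gcongr
  have h₃ : u / 2 * |s + t| ≤ u / 2 * ((u + 14 * u ^ 2 + 6 * u * q) * σ + q * (6 * σ)) := by
    gcongr
    exact hst.trans (add_le_add hs (htW.trans (by gcongr)))
  have : 0 ≤ u * σ := by positivity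
  have : 0 ≤ u * q * σ := by positivity
  have : 0 ≤ u ^ 2 * σ := by positivity
  have : 0 ≤ u ^ 3 * σ := by positivity
  have : 0 ≤ u ^ 2 * q * σ := by positivity
  rcases min_abs_le_or_abs_sub_round_le hR (by omega) ha hb ht with h | h | h
  · linarith [h₁ h]
  · linarith
  · linarith

lemma abs_round_twoSum_snd_add_le (hR : IsFaithfulRounding p R) (hp : 6 ≤ p) (ha : a ∈ Fp p)
    (hb : b ∈ Fp p) (ht : |t| ≤ 1 / 2 * |a + b|) :
    |R ((twoSum R a b).2 + t)| ≤ 3 / 5 * |a + b| := by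
  have hu := eps_pos p
  have hu32 := eps_le_one_div_32 hp
  have hs := abs_twoSum_snd_le hR hp ha hb
  have hround := hR.abs_round_le (by omega) ((twoSum R a b).2 + t)
  set s := (twoSum R a b).2
  set u := eps p
  calc |R (s + t)| ≤ (1 + u) * |s + t| := hround
    _ ≤ (1 + u) * ((u + 7 * u ^ 2) * |a + b| + 1 / 2 * |a + b|) := by
      gcongr
      exact (abs_add_le s t).trans (add_le_add hs ht)
    _ ≤ (1 + 1 / 32) * ((1 / 32 + 7 * (1 / 32) ^ 2) * |a + b| + 1 / 2 * |a + b|) := by gcongr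
    _ ≤ 3 / 5 * |a + b| := by linarith [abs_nonneg (a + b)]

lemma abs_mergeSums_twoSum_sub_le_add (hR : IsFaithfulRounding p R) (hp : 6 ≤ p)
    (ha : a ∈ Fp p) (hb : b ∈ Fp p) {T : ℝ} (hT : |T| ≤ 1 / 2 * |a + b|) (hle : |R T| ≤ |T|) :
    |(mergeSums R (twoSum R a b) (R T, T - R T)).1 +
        (mergeSums R (twoSum R a b) (R T, T - R T)).2 -
          (R (a + b) + R ((twoSum R a b).2 + R T) + (T - R T))| ≤
      (3 * eps p ^ 2 + 2 * eps p ^ 3) * |R (a + b) + R ((twoSum R a b).2 + R T)| +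
        2 * eps p * |T - R T| := by
  have hu32 := eps_le_one_div_32 hp
  have hhigh : 31 / 32 * |a + b| ≤ |R (a + b)| := by
    have := mul_le_mul_of_nonneg_right hu32 (abs_nonneg (a + b))
    linarith [hR.abs_sub_round_le (by omega) (a + b), abs_sub_abs_le_abs_sub (a + b) (R (a + b))]
  have hc := abs_round_twoSum_snd_add_le hR hp ha hb (hle.trans hT)
  have htail : |T - R T| ≤ 1 / 32 * |T| :=
    (hR.abs_sub_round_le (by omega) T).trans (by gcongr)
  have htri := abs_add' (R (a + b)) (R ((twoSum R a b).2 + R T))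
  rw [add_comm _ (R (a + b))] at htri
  refine abs_mergeSums_sub_le hR hp (s := twoSum R a b) (t := (R T, T - R T)) (hR.mem _)
    (dominates_of_abs_le (hR.mem _) (hR.mem _) (hc.trans ?_)) (htail.trans ?_)
  · exact le_trans (by linarith [abs_nonneg (a + b)]) hhigh
  · change 1 / 32 * |T| ≤ |R (a + b) + R ((twoSum R a b).2 + R T)| / 2
    linarith [abs_nonneg (a + b)]

lemma abs_add_le_abs_add_add_of_abs_le {T r : ℝ} (hT : |T| ≤ r) :
    |a + b| ≤ |a + b + T| + r := by
  have := abs_add' (a + b) T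
  rw [add_comm T] at this
  linarith

lemma abs_sub_round_le_of_no_cancel (hR : IsFaithfulRounding p R) (hp : 1 ≤ p) (hq0 : 0 ≤ q)
    (hq : q ≤ 1 / 6) {T : ℝ} (hT : |T| ≤ q * (|a| + |b|)) (hW : |a| + |b| ≤ 3 * |a + b|)
    (hσ : 0 ≤ σ) (hN : |a + b| ≤ (1 + 6 * q) * σ) : |T - R T| ≤ 6 * eps p * q * σ := by
  have hu := eps_pos p
  have hNσ : |a + b| ≤ (1 + 6 * (1 / 6)) * σ := hN.trans (by gcongr)
  calc |T - R T| ≤ eps p * |T| := hR.abs_sub_round_le hp T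
    _ ≤ eps p * (q * (3 * ((1 + 6 * (1 / 6)) * σ))) := by
      gcongr
      exact hT.trans (by gcongr; exact hW.trans (by gcongr))
    _ = 6 * eps p * q * σ := by ring

/-- The sum is perturbed by the defect of `2Sum` and by the rounding of `c = s_l + t_h`. -/
lemma abs_round_add_round_add_sub_le_of_no_cancel (hR : IsFaithfulRounding p R) (hp : 6 ≤ p)
    (ha : a ∈ Fp p) (hb : b ∈ Fp p) (hq0 : 0 ≤ q) (hq : q ≤ 1 / 6) {T : ℝ}
    (hT : |T| ≤ q * (|a| + |b|)) (hle : |R T| ≤ |T|) (hW : |a| + |b| ≤ 3 * |a + b|) :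
    |R (a + b) + R ((twoSum R a b).2 + R T) + (T - R T) - (a + b + T)| ≤
      (3 * q * eps p + 8 * eps p ^ 2 + 48 * eps p ^ 2 * q + 52 * eps p ^ 3) * |a + b + T| := by
  have hσ := abs_add_le_abs_add_add_of_abs_le (a := a) (b := b) hT
  obtain ⟨hσ0, hN⟩ := nonneg_and_le_mul_of_no_cancel (abs_nonneg _) hq0 hq hW hσ
  have hδ := abs_twoSum_snd_sub_le_of_no_cancel hR hp ha hb hq hσ0 hN
  have hε := abs_twoSum_snd_add_sub_round_le hR hp ha hb (hR.mem T) hq0 hq (hle.trans hT) hW hσ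
  set s := (twoSum R a b).2
  rw [show R (a + b) + R (s + R T) + (T - R T) - (a + b + T) =
    s - (a + b - R (a + b)) - (s + R T - R (s + R T)) by ring]
  linarith [abs_sub (s - (a + b - R (a + b))) (s + R T - R (s + R T))]

lemma abs_mergeSums_twoSum_sub_le_of_no_cancel (hR : IsFaithfulRounding p R) (hp : 6 ≤ p)
    (ha : a ∈ Fp p) (hb : b ∈ Fp p) (hq0 : 0 ≤ q) (hq : q ≤ 1 / 6) {T : ℝ}
    (hT : |T| ≤ q * (|a| + |b|)) (hle : |R T| ≤ |T|) (hW : |a| + |b| ≤ 3 * |a + b|) :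
    |(mergeSums R (twoSum R a b) (R T, T - R T)).1 +
        (mergeSums R (twoSum R a b) (R T, T - R T)).2 - (a + b + T)| ≤
      (3 * q * eps p + 11 * eps p ^ 2 + 60 * eps p ^ 2 * q + 64 * eps p ^ 3) * |a + b + T| := by
  have hu := eps_pos p
  have hu32 := eps_le_one_div_32 hp
  have hσ := abs_add_le_abs_add_add_of_abs_le (a := a) (b := b) hT
  obtain ⟨hσ0, hN⟩ := nonneg_and_le_mul_of_no_cancel (abs_nonneg _) hq0 hq hW hσ
  have hqW : q * (|a| + |b|) ≤ 1 / 6 * (3 * |a + b|) := by gcongr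
  have hmerge := abs_mergeSums_twoSum_sub_le_add hR hp ha hb (hT.trans (by linarith)) hle
  have htail := abs_sub_round_le_of_no_cancel hR (by omega) hq0 hq hT hW hσ0 hN
  have hsub := abs_round_add_round_add_sub_le_of_no_cancel hR hp ha hb hq0 hq hT hle hW
  set u := eps p
  set σ := |a + b + T|
  set A := R (a + b) + R ((twoSum R a b).2 + R T)
  have hA : |A| ≤ (1 + 3 * u) * σ :=
    calc |A| = |a + b + T + (A + (T - R T) - (a + b + T)) - (T - R T)| := by ring_nf
      _ ≤ σ + |A + (T - R T) - (a + b + T)| + |T - R T| :=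
        (abs_sub _ _).trans (by gcongr; exact abs_add_le _ _)
      _ ≤ σ + (3 * q * u + 8 * u ^ 2 + 48 * u ^ 2 * q + 52 * u ^ 3) * σ + 6 * u * q * σ := by
        gcongr
      _ = (1 + (9 * q + 8 * u + 48 * u * q + 52 * u ^ 2) * u) * σ := by ring
      _ ≤ (1 + (9 * (1 / 6) + 8 * (1 / 32) + 48 * (1 / 32) * (1 / 6) + 52 * (1 / 32) ^ 2) * u) *
          σ := by gcongr
      _ ≤ (1 + 3 * u) * σ := by gcongr; norm_num
  calc _ ≤ _ := abs_sub_le _ (A + (T - R T)) _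
    _ ≤ (3 * u ^ 2 + 2 * u ^ 3) * ((1 + 3 * u) * σ) + 2 * u * (6 * u * q * σ) +
        (3 * q * u + 8 * u ^ 2 + 48 * u ^ 2 * q + 52 * u ^ 3) * σ :=
      add_le_add (hmerge.trans (by gcongr)) hsub
    _ = (3 * q * u + 11 * u ^ 2 + 60 * u ^ 2 * q + (63 + 6 * u) * u ^ 3) * σ := by ring
    _ ≤ (3 * q * u + 11 * u ^ 2 + 60 * u ^ 2 * q + 64 * u ^ 3) * σ := by gcongr; linarith

end NoCancellation

theorem modified_accurate_relerr_bound_directed_general {p : ℕ} (hp : 6 ≤ p) {u o : ℝ}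
    (hu : u = (2 : ℝ) ^ (1 - (p : ℤ))) (ho0 : 0 ≤ o) (ho : o * u ≤ 1 / 6) {xh xl yh yl : ℝ}
    (hxh : xh ∈ Fp p) (hxl : xl ∈ Fp p) (hyh : yh ∈ Fp p) (hyl : yl ∈ Fp p)
    (hx : |xl| ≤ o * u * |xh|) (hy : |yl| ≤ o * u * |yh|) {R : ℝ → ℝ}
    (hR : ∀ x, Faithful p x (R x)) (hsign : 0 ≤ xl * yl) (hle : |R (xl + yl)| ≤ |xl + yl|) :
    |(modAccurateAdd R xh xl yh yl).1 + (modAccurateAdd R xh xl yh yl).2 -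
        (xh + xl + yh + yl)| ≤
      ((3 * o + 11) * u ^ 2 + 64 * (1 + o) * u ^ 3) * |xh + xl + yh + yl| := by
  replace hR := isFaithfulRounding_of_faithful (by omega) hR
  have hu0 : 0 < u := hu ▸ eps_pos p
  have hT : |xl + yl| ≤ o * u * (|xh| + |yh|) := by linarith [abs_add_le xl yl]
  have hcoeff : 0 ≤ 3 * o * u ^ 2 + 6 * u ^ 2 + 64 * (1 + o) * u ^ 3 := by positivity
  rw [modAccurateAdd_eq_mergeSums hR (by omega) hxl hyl hsign hle,
    show xh + xl + yh + yl = xh + yh + (xl + yl) by ring]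
  rcases le_total (3 * |xh + yh|) (|xh| + |yh|) with hcancel | hno_cancel
  · have hT3 : 3 * |xl + yl| ≤ |xh| + |yh| := by
      linarith [mul_le_mul_of_nonneg_right ho (by positivity : 0 ≤ |xh| + |yh|), abs_nonneg xh,
        abs_nonneg yh]
    have herr := add_sub_round_mem_Fp hR (by omega) hxl hyl hsign hle
    refine (abs_mergeSums_twoSum_sub_le_of_cancel hR hp hxh hyh hcancel hT3 hle herr).trans ?_
    rw [show eps p = u from hu.symm]
    gcongr
    linarith
  · refine (abs_mergeSums_twoSum_sub_le_of_no_cancel hR hp hxh hyh (by positivity) ho hT hle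
      hno_cancel).trans ?_
    rw [show eps p = u from hu.symm]
    refine mul_le_mul_of_nonneg_right ?_ (abs_nonneg _)
    linarith [mul_nonneg ho0 (pow_pos hu0 3).le]

lemma max_mul_le_one_eighth {u ox oy : ℝ} (hu : 0 < u) (hox : ox ≤ 1 / (8 * u) - 2)
    (hoy : oy ≤ 1 / (8 * u) - 2) : max ox oy * u ≤ 1 / 8 :=
  calc max ox oy * u ≤ (1 / (8 * u) - 2) * u := by gcongr; exact max_le hox hoy
    _ = 1 / 8 - 2 * u := by field_simp
    _ ≤ 1 / 8 := by linarith

lemma faithful_and_mul_nonneg_and_abs_round_add_le {p : ℕ} (hp : 1 ≤ p) {R : ℝ → ℝ} {a b : ℝ}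
    (h : (R = RD p ∧ 0 ≤ a ∧ 0 ≤ b) ∨ (R = RU p ∧ a ≤ 0 ∧ b ≤ 0)) :
    (∀ x, Faithful p x (R x)) ∧ 0 ≤ a * b ∧ |R (a + b)| ≤ |a + b| := by
  rcases h with ⟨rfl, ha, hb⟩ | ⟨rfl, ha, hb⟩
  · exact ⟨fun _ => Or.inl rfl, mul_nonneg ha hb, abs_RD_le_of_nonneg hp (add_nonneg ha hb)⟩
  · exact ⟨fun _ => Or.inr rfl, mul_nonneg_of_nonpos_of_nonpos ha hb,
      abs_RU_le_of_nonpos hp (add_nonpos ha hb)⟩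

theorem modified_accurate_relerr_bound_directed :
    ∃ C : ℝ, 0 ≤ C ∧
      ∀ (p : ℕ), 6 ≤ p →
        ∀ u ox oy : ℝ, u = (2 : ℝ) ^ (1 - (p : ℤ)) →
          1 ≤ ox → ox ≤ 1 / (8 * u) - 2 → 1 ≤ oy → oy ≤ 1 / (8 * u) - 2 →
          ∀ xh xl yh yl : ℝ, xh ∈ Fp p → xl ∈ Fp p → yh ∈ Fp p → yl ∈ Fp p →
            |xl| ≤ ox * u * |xh| → |yl| ≤ oy * u * |yh| →
            ∀ R : ℝ → ℝ,
              ((R = RD p ∧ 0 ≤ xl ∧ 0 ≤ yl) ∨ (R = RU p ∧ xl ≤ 0 ∧ yl ≤ 0)) →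
              |(modAccurateAdd R xh xl yh yl).1 + (modAccurateAdd R xh xl yh yl).2 -
                  (xh + xl + yh + yl)| ≤
                ((3 * max ox oy + 15) * u ^ 2 + C * (1 + max ox oy) * u ^ 3) *
                  |xh + xl + yh + yl| := by
  refine ⟨64, by norm_num, fun p hp u ox oy hu hox hox' _ hoy' xh xl yh yl hxh hxl hyh hyl
    hx hy R hR => ?_⟩
  have hu0 : 0 < u := hu ▸ eps_pos p
  have hx' : |xl| ≤ max ox oy * u * |xh| := hx.trans (by gcongr; exact le_max_left ox oy)
  have hy' : |yl| ≤ max ox oy * u * |yh| := hy.trans (by gcongr; exact le_max_right ox oy)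
  obtain ⟨hfaithful, hsign, hle⟩ := faithful_and_mul_nonneg_and_abs_round_add_le (by omega) hR
  refine (modified_accurate_relerr_bound_directed_general hp hu
    (zero_le_one.trans (hox.trans (le_max_left _ _)))
    ((max_mul_le_one_eighth hu0 hox' hoy').trans (by norm_num)) hxh hxl hyh hyl hx' hy'
    hfaithful hsign hle).trans ?_
  gcongr
  norm_num
end

section
/- Let A, C, P, D be real numbers and ε_mul, ε_add ≥ 0 real numbers such that |P − A| ≤ ε_mul·|A| (P is the computed product with relative error ε_mul) and |D − (P + C)| ≤ ε_add·(|P| + |C|) (D is the computed sum with modified relative error ε_add). Then the combined multiplication-addition result satisfies |D − (A + C)| ≤ (ε_add + ε_mul·(1 + ε_add))·(|A| + |C|). -/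
section SeminormedAddGroup

variable {E : Type*} [SeminormedAddGroup E] {a c p d : E} {ε δ : ℝ}

theorem norm_le_one_add_mul_norm_of_norm_sub_le (hp : ‖p - a‖ ≤ ε * ‖a‖) :
    ‖p‖ ≤ (1 + ε) * ‖a‖ :=
  calc
    ‖p‖ ≤ ‖a‖ + ‖p - a‖ := norm_le_norm_add_norm_sub' p a
    _ ≤ ‖a‖ + ε * ‖a‖ := by gcongr
    _ = (1 + ε) * ‖a‖ := by ring

theorem maa_error_composition_general (hδ : 0 ≤ δ) (hp : ‖p - a‖ ≤ ε * ‖a‖)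
    (hd : ‖d - (p + c)‖ ≤ δ * (‖p‖ + ‖c‖)) :
    ‖d - (a + c)‖ ≤ (δ + ε * (1 + δ)) * ‖a‖ + δ * ‖c‖ :=
  calc
    ‖d - (a + c)‖ ≤ ‖d - (p + c)‖ + ‖p + c - (a + c)‖ :=
      norm_sub_le_norm_sub_add_norm_sub d (p + c) (a + c)
    _ = ‖d - (p + c)‖ + ‖p - a‖ := by rw [add_sub_add_right_eq_sub]
    _ ≤ δ * (‖p‖ + ‖c‖) + ε * ‖a‖ := add_le_add hd hp
    _ ≤ δ * ((1 + ε) * ‖a‖ + ‖c‖) + ε * ‖a‖ := by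
      gcongr
      exact norm_le_one_add_mul_norm_of_norm_sub_le hp
    _ = (δ + ε * (1 + δ)) * ‖a‖ + δ * ‖c‖ := by ring

end SeminormedAddGroup

/-- Error-composition inequality for a multiply-then-add (MAA) operation: if the
computed product `P` of the exact product `A` has relative error at most `ε_mul`, and
the computed sum `D` of `P + C` has modified relative error at most `ε_add`, then
`|D - (A + C)| ≤ (ε_add + ε_mul·(1 + ε_add))·(|A| + |C|)`. -/
theorem maa_error_composition
    (A C P D emul eadd : ℝ) (hmul : 0 ≤ emul) (hadd : 0 ≤ eadd)
    (hP : |P - A| ≤ emul * |A|)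
    (hD : |D - (P + C)| ≤ eadd * (|P| + |C|)) :
    |D - (A + C)| ≤ (eadd + emul * (1 + eadd)) * (|A| + |C|) := by
  have hsharp : |D - (A + C)| ≤ (eadd + emul * (1 + eadd)) * |A| + eadd * |C| :=
    maa_error_composition_general (E := ℝ) hadd hP hD
  linarith [show 0 ≤ emul * (1 + eadd) * |C| by positivity]
end
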